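/- Let g be a finite-dimensional Lie algebra over a field K whose Killing form B is nondegenerate, let h be a Lie subalgebra of g, let X_λ ∈ g, and define λ ∈ g* by λ(Y) = B(X_λ, Y). Set Z_g(λ) = {Y ∈ g : λ(⁅X,Y⁆) = 0 for all X ∈ g}, Z_g(h;λ) = {Y ∈ g : λ(⁅X,Y⁆) = 0 for all X ∈ h}, and [X_λ, h] = {⁅X_λ, X⁆ : X ∈ h}. Then the inclusion Z_g(h;λ) ⊆ h + Z_g(λ) holds if and only if the B-orthogonal complement of h + Z_g(λ) is contained in [X_λ, h]. -/

import Mathlib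

/-!
By invariance of the Killing form `B`, `λ ⁅X, Y⁆ = B(Xlam, ⁅X, Y⁆) = B(⁅Xlam, X⁆, Y)`, so
`Z_g(h;λ)` is the `B`-orthogonal complement of `[Xlam, h]`. Since `B` is nondegenerate and `g` is
finite-dimensional, taking complements is an order-reversing involution on subspaces, hence
`[Xlam, h]^⊥ ≤ W ↔ W^⊥ ≤ [Xlam, h]` for every subspace `W`, in particular for `h + Z_g(λ)`.
-/

/-- For a linear functional `lam` on a Lie algebra `g` and a set `s ⊆ g`, the subspace
`{Y ∈ g : lam ⁅X, Y⁆ = 0 for all X ∈ s}`.  For `s = Set.univ` this is the stabilizer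
`Z_g(λ)`; for `s = h` a Lie subalgebra it is `Z_g(h;λ)`. -/
def relCentralizer (K : Type*) [Field K] (g : Type*) [LieRing g] [LieAlgebra K g]
    (lam : Module.Dual K g) (s : Set g) : Submodule K g where
  carrier := {Y : g | ∀ X ∈ s, lam ⁅X, Y⁆ = 0}
  add_mem' := by
    intro a b ha hb X hX
    simp [lie_add, ha X hX, hb X hX]
  zero_mem' := by
    intro X hX
    simp
  smul_mem' := by
    intro c a ha X hX
    simp [lie_smul, ha X hX]

theorem relCentralizer_killingForm_eq_orthogonal
    (K : Type*) [Field K] (g : Type*) [LieRing g] [LieAlgebra K g]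
    (h : LieSubalgebra K g) (x : g) :
    relCentralizer K g (killingForm K g x) (h : Set g) =
      LinearMap.BilinForm.orthogonal (killingForm K g)
        (h.toSubmodule.map (LieAlgebra.ad K g x)) := by
  ext Y
  rw [LinearMap.BilinForm.mem_orthogonal_iff]
  constructor
  · rintro hY _ ⟨X, hX, rfl⟩
    exact (LieModule.traceForm_apply_lie_apply K g g x X Y).trans (hY X hX)
  · intro hY X hX
    exact (LieModule.traceForm_apply_lie_apply K g g x X Y).symm.trans
      (hY _ (Submodule.mem_map_of_mem hX))

/-- Lemma 3.3 of the paper: if the Killing form `B` of `g` is nondegenerate and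
`λ = B(X_λ, ·)`, then `Z_g(h;λ) ⊆ h + Z_g(λ)` holds if and only if the `B`-orthogonal
complement of `h + Z_g(λ)` is contained in `[X_λ, h]`. -/
theorem relCentralizer_le_iff_killing_orthogonal_subset_bracket
    (K : Type*) [Field K] (g : Type*) [LieRing g] [LieAlgebra K g]
    [Module.Finite K g]
    (hB : (killingForm K g).Nondegenerate)
    (h : LieSubalgebra K g) (Xlam : g) :
    (relCentralizer K g (killingForm K g Xlam) (h : Set g) : Set g)
        ⊆ ((h.toSubmodule ⊔
            relCentralizer K g (killingForm K g Xlam) Set.univ : Submodule K g) : Set g)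
    ↔ {Y : g | ∀ w ∈ (h.toSubmodule ⊔
            relCentralizer K g (killingForm K g Xlam) Set.univ : Submodule K g),
          killingForm K g w Y = 0}
        ⊆ (fun X => ⁅Xlam, X⁆) '' (h : Set g) := by
  have hrefl : (killingForm K g).IsRefl := (LieModule.traceForm_isSymm K g g).isRefl
  rw [relCentralizer_killingForm_eq_orthogonal]
  generalize h.toSubmodule ⊔ relCentralizer K g (killingForm K g Xlam) Set.univ = W
  set V := h.toSubmodule.map (LieAlgebra.ad K g Xlam)
  change LinearMap.BilinForm.orthogonal (killingForm K g) V ≤ W ↔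
    LinearMap.BilinForm.orthogonal (killingForm K g) W ≤ V
  constructor
  · intro hVW
    rw [← LinearMap.BilinForm.orthogonal_orthogonal hB hrefl V]
    exact LinearMap.BilinForm.orthogonal_le hVW
  · intro hWV
    rw [← LinearMap.BilinForm.orthogonal_orthogonal hB hrefl W]
    exact LinearMap.BilinForm.orthogonal_le hWV
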